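/- Let n, m be positive integers and let 𝒜 ∈ ℂ^{2n×2n}, ℬ ∈ ℂ^{2n×2m}, 𝒞 ∈ ℂ^{2m×2n}, 𝒟 ∈ ℂ^{2m×2m} satisfy the physical realizability conditions 𝒜 + 𝒜^♭ + ℬ·ℬ^♭ = 0 and ℬ = −𝒞^♭·𝒟, and suppose 𝒟^♭·𝒟 = 𝒟·𝒟^♭ = I_{2m}. Define the transfer matrix Ξ(s) := 𝒞·(sI − 𝒜)^{−1}·ℬ + 𝒟. Then for every s ∈ ℂ such that both sI − 𝒜 and −conj(s)·I − 𝒜 are invertible, the all-pass identity Ξ(−conj(s))^♭ · Ξ(s) = I_{2m} holds. -/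

import Mathlib

open Matrix

noncomputable section

/-- The matrix `J_k = diag(I_k, -I_k)` over `ℂ`. -/
def Jc (k : Type*) [Fintype k] [DecidableEq k] : Matrix (k ⊕ k) (k ⊕ k) ℂ :=
  Matrix.fromBlocks 1 0 0 (-1)

/-- The `♭`-adjoint `X^♭ = J_r · Xᴴ · J_k` of a `2k × 2r` complex matrix. -/
def flatAdj {k r : Type*} [Fintype k] [Fintype r] [DecidableEq k] [DecidableEq r]
    (X : Matrix (k ⊕ k) (r ⊕ r) ℂ) : Matrix (r ⊕ r) (k ⊕ k) ℂ :=
  Jc r * Xᴴ * Jc k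

/-!
For `Ξ(s) = C (s - A)⁻¹ B + D`, the adjoint `Ξ(-s̄)⋆` is the transfer matrix of the dual system
`(A⋆, C⋆, B⋆, D⋆)` at `-s`. Realizability gives `C⋆ D = -B`, `D⋆ C = -B⋆` and
`C⋆ C = B B⋆ = (-s - A⋆) + (s - A)`. Hence in `Ξ(-s̄)⋆ Ξ(s)` the quadratic term collapses to
`B⋆ ((-s - A⋆)⁻¹ + (s - A)⁻¹) B`, which cancels both cross terms and leaves `D⋆ D = 1`.
The adjoint may be taken for any non-degenerate Hermitian forms; `♭` is the case of the forms with
Gram matrices `J_k`.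
-/

section TransferMatrix

variable {k r 𝕜 : Type*} [Fintype k] [DecidableEq k] [CommRing 𝕜]

/-- The transfer matrix `C (s - A)⁻¹ B + D` of the linear system `(A, B, C, D)`. It is meaningful
where `s - A` is invertible; elsewhere the inverse is `0` and the value is `D`. -/
def transferMatrix (A : Matrix k k 𝕜) (B : Matrix k r 𝕜) (C : Matrix r k 𝕜) (D : Matrix r r 𝕜)
    (s : 𝕜) : Matrix r r 𝕜 :=
  C * (s • (1 : Matrix k k 𝕜) - A)⁻¹ * B + D

theorem transferMatrix_mul_transferMatrix_eq_one [Fintype r] [DecidableEq r]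
    {A A' : Matrix k k 𝕜} {B C' : Matrix k r 𝕜} {C B' : Matrix r k 𝕜} {D D' : Matrix r r 𝕜}
    (hA : A + A' + B * B' = 0) (hC'D : C' * D = -B) (hD'C : D' * C = -B') (hD'D : D' * D = 1)
    {s : 𝕜} (hs : IsUnit (s • (1 : Matrix k k 𝕜) - A).det)
    (hs' : IsUnit (-s • (1 : Matrix k k 𝕜) - A').det) :
    transferMatrix A' C' B' D' (-s) * transferMatrix A B C D s = 1 := by
  have hC'C : C' * C = (-s • 1 - A') + (s • 1 - A) :=
    calc C' * C = C' * (D * D') * C := by rw [mul_eq_one_comm.mp hD'D, Matrix.mul_one]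
      _ = (C' * D) * (D' * C) := by simp only [Matrix.mul_assoc]
      _ = B * B' := by rw [hC'D, hD'C, Matrix.neg_mul, Matrix.mul_neg, neg_neg]
      _ = (-s • 1 - A') + (s • 1 - A) := by
        rw [eq_neg_of_add_eq_zero_right hA, neg_smul]
        abel
  have resolvent_add : (-s • 1 - A')⁻¹ + (s • 1 - A)⁻¹
      = (-s • 1 - A')⁻¹ * (C' * C) * (s • 1 - A)⁻¹ := by
    rw [hC'C]
    exact Matrix.inv_add_inv (by simp only [Matrix.isUnit_iff_isUnit_det, hs, hs'])
  unfold transferMatrix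
  set R := (s • 1 - A)⁻¹
  set R' := (-s • 1 - A')⁻¹
  calc (B' * R' * C' + D') * (C * R * B + D)
      = B' * (R' * (C' * C) * R) * B + B' * R' * (C' * D) + (D' * C) * R * B + D' * D := by
        simp only [Matrix.add_mul, Matrix.mul_add, Matrix.mul_assoc]
        abel
    _ = B' * (R' + R) * B - B' * R' * B - B' * R * B + 1 := by
        rw [← resolvent_add, hC'D, hD'C, hD'D]
        simp only [Matrix.mul_neg, Matrix.neg_mul, sub_eq_add_neg]
    _ = 1 := by
        rw [Matrix.mul_add, Matrix.add_mul]
        abel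

end TransferMatrix

section GramAdjoint

variable {k r l 𝕜 : Type*} [Fintype k] [Fintype r] [Fintype l]
  [DecidableEq r] [DecidableEq l] [CommRing 𝕜] [StarRing 𝕜]
  {J : Matrix k k 𝕜} {K : Matrix r r 𝕜} {L : Matrix l l 𝕜}

/-- The adjoint of `X : 𝕜ʳ → 𝕜ᵏ` for the sesquilinear forms with Gram matrices `J` on `𝕜ᵏ` and `K`
on `𝕜ʳ`, that is, the solution of `K * X⋆ = Xᴴ * J` when `K` is invertible. -/
def gramAdjoint (J : Matrix k k 𝕜) (K : Matrix r r 𝕜) (X : Matrix k r 𝕜) : Matrix r k 𝕜 :=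
  K⁻¹ * Xᴴ * J

theorem gramAdjoint_add (X Y : Matrix k r 𝕜) :
    gramAdjoint J K (X + Y) = gramAdjoint J K X + gramAdjoint J K Y := by
  simp only [gramAdjoint, conjTranspose_add, Matrix.mul_add, Matrix.add_mul]

theorem gramAdjoint_neg (X : Matrix k r 𝕜) : gramAdjoint J K (-X) = -gramAdjoint J K X := by
  simp only [gramAdjoint, conjTranspose_neg, Matrix.mul_neg, Matrix.neg_mul]

theorem gramAdjoint_mul (hK : IsUnit K.det) (X : Matrix k r 𝕜) (Y : Matrix r l 𝕜) :
    gramAdjoint J L (X * Y) = gramAdjoint K L Y * gramAdjoint J K X := by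
  simp only [gramAdjoint, conjTranspose_mul, Matrix.mul_assoc, mul_nonsing_inv_cancel_left _ _ hK]

variable [DecidableEq k]

theorem gramAdjoint_gramAdjoint (hJ : J.IsHermitian) (hJ_unit : IsUnit J.det)
    (hK : K.IsHermitian) (hK_unit : IsUnit K.det) (X : Matrix k r 𝕜) :
    gramAdjoint K J (gramAdjoint J K X) = X := by
  simp only [gramAdjoint, conjTranspose_mul, conjTranspose_conjTranspose, conjTranspose_nonsing_inv,
    hJ.eq, hK.eq, Matrix.mul_assoc, nonsing_inv_mul _ hK_unit, Matrix.mul_one,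
    nonsing_inv_mul_cancel_left _ _ hJ_unit]

theorem gramAdjoint_nonsing_inv (hJ : IsUnit J.det) (X : Matrix k k 𝕜) :
    gramAdjoint J J X⁻¹ = (gramAdjoint J J X)⁻¹ := by
  simp only [gramAdjoint, Matrix.mul_inv_rev, nonsing_inv_nonsing_inv _ hJ,
    conjTranspose_nonsing_inv, Matrix.mul_assoc]

theorem gramAdjoint_smul_one_sub (hJ : IsUnit J.det) (s : 𝕜) (A : Matrix k k 𝕜) :
    gramAdjoint J J (s • 1 - A) = star s • 1 - gramAdjoint J J A := by
  simp only [gramAdjoint, conjTranspose_sub, conjTranspose_smul, conjTranspose_one, Matrix.mul_sub,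
    Matrix.sub_mul, Matrix.mul_smul, Matrix.smul_mul, Matrix.mul_one, nonsing_inv_mul _ hJ]

theorem det_gramAdjoint (hJ : IsUnit J.det) (X : Matrix k k 𝕜) :
    (gramAdjoint J J X).det = star X.det := by
  rw [gramAdjoint, det_conj' ((isUnit_iff_isUnit_det J).mpr hJ), det_conjTranspose]

theorem gramAdjoint_transferMatrix (hJ : IsUnit J.det) (A : Matrix k k 𝕜)
    (B : Matrix k r 𝕜) (C : Matrix r k 𝕜) (D : Matrix r r 𝕜) (s : 𝕜) :
    gramAdjoint K K (transferMatrix A B C D s) =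
      transferMatrix (gramAdjoint J J A) (gramAdjoint K J C) (gramAdjoint J K B)
        (gramAdjoint K K D) (star s) := by
  simp only [transferMatrix, gramAdjoint_add, gramAdjoint_mul hJ, gramAdjoint_nonsing_inv hJ,
    gramAdjoint_smul_one_sub hJ, Matrix.mul_assoc]

theorem all_pass_identity_general (hJ : J.IsHermitian) (hJ_unit : IsUnit J.det)
    (hK : K.IsHermitian) (hK_unit : IsUnit K.det)
    {A : Matrix k k 𝕜} {B : Matrix k r 𝕜} {C : Matrix r k 𝕜} {D : Matrix r r 𝕜}
    (hA : A + gramAdjoint J J A + B * gramAdjoint J K B = 0)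
    (hB : B = -(gramAdjoint K J C * D)) (hD : gramAdjoint K K D * D = 1)
    {s : 𝕜} (hs : IsUnit (s • (1 : Matrix k k 𝕜) - A).det)
    (hs' : IsUnit (-star s • (1 : Matrix k k 𝕜) - A).det) :
    gramAdjoint K K (transferMatrix A B C D (-star s)) * transferMatrix A B C D s = 1 := by
  have hCD : gramAdjoint K J C * D = -B := by rw [hB, neg_neg]
  have hDC : gramAdjoint K K D * C = -gramAdjoint J K B := by
    rw [hB, gramAdjoint_neg, neg_neg, gramAdjoint_mul hK_unit,
      gramAdjoint_gramAdjoint hK hK_unit hJ hJ_unit]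
  have star_neg_star : star (-star s) = -s := by rw [star_neg, star_star]
  have hs_dual : IsUnit (-s • (1 : Matrix k k 𝕜) - gramAdjoint J J A).det := by
    rw [← star_neg_star, ← gramAdjoint_smul_one_sub hJ_unit, det_gramAdjoint hJ_unit]
    exact hs'.star
  rw [gramAdjoint_transferMatrix hJ_unit, star_neg_star]
  exact transferMatrix_mul_transferMatrix_eq_one hA hCD hDC hD hs hs_dual

end GramAdjoint

section FlatAdjoint

variable (k : Type*) [Fintype k] [DecidableEq k]

theorem Jc_mul_self : Jc k * Jc k = 1 := by
  simp [Jc, fromBlocks_multiply]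

theorem isHermitian_Jc : (Jc k).IsHermitian := by
  simp [Matrix.IsHermitian, Jc, fromBlocks_conjTranspose]

theorem isUnit_det_Jc : IsUnit (Jc k).det :=
  isUnit_det_of_left_inverse (Jc_mul_self k)

variable {k} {r : Type*} [Fintype r] [DecidableEq r]

theorem flatAdj_eq_gramAdjoint (X : Matrix (k ⊕ k) (r ⊕ r) ℂ) :
    flatAdj X = gramAdjoint (Jc k) (Jc r) X := by
  rw [flatAdj, gramAdjoint, inv_eq_left_inv (Jc_mul_self r)]

end FlatAdjoint

/-- under the physical realizability conditions
`𝒜 + 𝒜^♭ + ℬ ℬ^♭ = 0`, `ℬ = -𝒞^♭ 𝒟` and `𝒟^♭ 𝒟 = 𝒟 𝒟^♭ = I`, the transfer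
matrix `Ξ(s) = 𝒞 (sI - 𝒜)⁻¹ ℬ + 𝒟` satisfies the all-pass identity
`Ξ(-conj s)^♭ Ξ(s) = I` at every `s` where both resolvents exist. -/
theorem all_pass_identity
    (n m : ℕ) (hn : 0 < n) (hm : 0 < m)
    (𝒜 : Matrix (Fin n ⊕ Fin n) (Fin n ⊕ Fin n) ℂ)
    (ℬ : Matrix (Fin n ⊕ Fin n) (Fin m ⊕ Fin m) ℂ)
    (𝒞 : Matrix (Fin m ⊕ Fin m) (Fin n ⊕ Fin n) ℂ)
    (𝒟 : Matrix (Fin m ⊕ Fin m) (Fin m ⊕ Fin m) ℂ)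
    (hPR1 : 𝒜 + flatAdj 𝒜 + ℬ * flatAdj ℬ = 0)
    (hPR2 : ℬ = -(flatAdj 𝒞 * 𝒟))
    (h𝒟1 : flatAdj 𝒟 * 𝒟 = 1) (h𝒟2 : 𝒟 * flatAdj 𝒟 = 1)
    (Ξ : ℂ → Matrix (Fin m ⊕ Fin m) (Fin m ⊕ Fin m) ℂ)
    (hΞ : ∀ s : ℂ,
      Ξ s = 𝒞 * (s • (1 : Matrix (Fin n ⊕ Fin n) (Fin n ⊕ Fin n) ℂ) - 𝒜)⁻¹ * ℬ + 𝒟) :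
    ∀ s : ℂ,
      IsUnit (s • (1 : Matrix (Fin n ⊕ Fin n) (Fin n ⊕ Fin n) ℂ) - 𝒜).det →
      IsUnit ((-(starRingEnd ℂ s)) • (1 : Matrix (Fin n ⊕ Fin n) (Fin n ⊕ Fin n) ℂ) - 𝒜).det →
      flatAdj (Ξ (-(starRingEnd ℂ s))) * Ξ s = 1 := by
  obtain rfl : Ξ = transferMatrix 𝒜 ℬ 𝒞 𝒟 := funext hΞ
  simp only [flatAdj_eq_gramAdjoint] at hPR1 hPR2 h𝒟1 ⊢
  exact fun _ => all_pass_identity_general (isHermitian_Jc _) (isUnit_det_Jc _) (isHermitian_Jc _)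
    (isUnit_det_Jc _) hPR1 hPR2 h𝒟1
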